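/- Let E, H : ℝ × ℝ³ → Matrix (Fin 3) (Fin 3) ℝ be smooth matrix-valued fields that are pointwise symmetric, trace-free, and spatially divergence-free (Σ_b ∂_b E_{ab} = 0 = Σ_b ∂_b H_{ab}), and suppose ∂ₜE_{ab} = (curl H)_{ab} and ∂ₜH_{ab} = −(curl E)_{ab}, with the tensor curl taken in the spatial variables. Then every component of H satisfies the wave equation ∂ₜ²H_{ab} = ΔH_{ab}, where Δ = Σ_c ∂_c². -/

import Mathlib

/-- Time partial derivative of a scalar field on `ℝ × ℝ³`. -/
noncomputable def pt (f : ℝ × (Fin 3 → ℝ) → ℝ) (p : ℝ × (Fin 3 → ℝ)) : ℝ :=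
  deriv (fun s => f (s, p.2)) p.1

/-- Spatial partial derivative `∂_i` of a scalar field on `ℝ × ℝ³`. -/
noncomputable def ps (i : Fin 3) (f : ℝ × (Fin 3 → ℝ) → ℝ) (p : ℝ × (Fin 3 → ℝ)) : ℝ :=
  deriv (fun s => f (p.1, Function.update p.2 i s)) (p.2 i)

/-- Levi-Civita symbol on three indices. -/
noncomputable def eps (a b c : Fin 3) : ℝ :=
  (((b : ℕ) : ℝ) - ((a : ℕ) : ℝ)) * (((c : ℕ) : ℝ) - ((b : ℕ) : ℝ))
    * (((c : ℕ) : ℝ) - ((a : ℕ) : ℝ)) / 2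

/-- Symmetrized spatial tensor curl of a matrix-valued field on `ℝ × ℝ³`:
`(curl S)_{ab} = ½ Σ_{c,d} ( ε_{acd} ∂_c S_{db} + ε_{bcd} ∂_c S_{da} )`. -/
noncomputable def curlT (S : ℝ × (Fin 3 → ℝ) → Matrix (Fin 3) (Fin 3) ℝ)
    (p : ℝ × (Fin 3 → ℝ)) : Matrix (Fin 3) (Fin 3) ℝ :=
  Matrix.of fun a b =>
    (1 / 2) * ∑ c, ∑ d,
      (eps a c d * ps c (fun q => S q d b) p + eps b c d * ps c (fun q => S q d a) p)

/-!
Differentiating `∂ₜH = −curl E` in time and using `∂ₜE = curl H` gives `∂ₜ²H = −curl (curl H)`, so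
only `curl (curl H) = −ΔH` is at stake. The antisymmetric part of the unsymmetrized curl
`ε_{acd} ∂_c H_{db}` is dual to `div H − ∇ tr H`, hence vanishes: the tensor curl of `H` is the
vector curl of its columns. The vector identity `curl curl = grad div − Δ` then applies to each
column, and the columns of `H` are divergence-free because `H` is symmetric.
-/

section LineDeriv

variable {𝕜 E F : Type*} [NontriviallyNormedField 𝕜] [NormedAddCommGroup F] [NormedSpace 𝕜 F]

section Module

variable [AddCommGroup E] [Module 𝕜 E] {x v : E}

lemma lineDeriv_fun_const (y : F) : lineDeriv 𝕜 (fun _ : E => y) x v = 0 :=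
  deriv_const _ _

lemma lineDeriv_fun_add {f g : E → F} (hf : LineDifferentiableAt 𝕜 f x v)
    (hg : LineDifferentiableAt 𝕜 g x v) :
    lineDeriv 𝕜 (fun y => f y + g y) x v = lineDeriv 𝕜 f x v + lineDeriv 𝕜 g x v :=
  deriv_fun_add hf hg

lemma lineDeriv_fun_sum {ι : Type*} {s : Finset ι} {f : ι → E → F}
    (hf : ∀ i ∈ s, LineDifferentiableAt 𝕜 (f i) x v) :
    lineDeriv 𝕜 (fun y => ∑ i ∈ s, f i y) x v = ∑ i ∈ s, lineDeriv 𝕜 (f i) x v :=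
  deriv_fun_sum hf

lemma lineDeriv_fun_const_mul (k : 𝕜) (f : E → 𝕜) :
    lineDeriv 𝕜 (fun y => k * f y) x v = k * lineDeriv 𝕜 f x v :=
  deriv_const_mul_field k

end Module

variable [NormedAddCommGroup E] [NormedSpace 𝕜 E] {f : E → F}

lemma contDiff_lineDeriv {m n : WithTop ℕ∞} (hf : ContDiff 𝕜 n f) (hmn : m + 1 ≤ n) (v : E) :
    ContDiff 𝕜 m (fun x => lineDeriv 𝕜 f x v) := by
  have hd : Differentiable 𝕜 f := (hf.of_le (le_add_self.trans hmn)).differentiable one_ne_zero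
  simp only [(hd _).lineDeriv_eq_fderiv]
  exact (hf.fderiv_right hmn).clm_apply contDiff_const

lemma lineDeriv_lineDeriv_comm {n : WithTop ℕ∞} (hf : ContDiff 𝕜 n f)
    (hn : minSmoothness 𝕜 2 ≤ n) (x v w : E) :
    lineDeriv 𝕜 (fun y => lineDeriv 𝕜 f y v) x w =
      lineDeriv 𝕜 (fun y => lineDeriv 𝕜 f y w) x v := by
  have hf₂ : ContDiff 𝕜 2 f := hf.of_le (le_minSmoothness.trans hn)
  have hd : DifferentiableAt 𝕜 (fderiv 𝕜 f) x :=
    ((hf₂.fderiv_right one_add_one_eq_two.le).differentiable one_ne_zero) x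
  have second (u z : E) :
      lineDeriv 𝕜 (fun y => lineDeriv 𝕜 f y u) x z = fderiv 𝕜 (fderiv 𝕜 f) x z u := by
    simp only [(hf₂.differentiable two_ne_zero _).lineDeriv_eq_fderiv]
    rw [(hd.clm_apply (differentiableAt_const u)).lineDeriv_eq_fderiv,
      fderiv_clm_apply hd (differentiableAt_const u)]
    simp
  rw [second, second]
  exact hf.contDiffAt.isSymmSndFDerivAt hn w v

end LineDeriv

lemma pt_eq_lineDeriv (f : ℝ × (Fin 3 → ℝ) → ℝ) (p : ℝ × (Fin 3 → ℝ)) :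
    pt f p = lineDeriv ℝ f p (1, 0) := by
  have h := deriv_comp_const_add (f := fun s => f (s, p.2)) p.1 0
  simpa [pt, lineDeriv, Prod.add_def] using h.symm

lemma ps_eq_lineDeriv (i : Fin 3) (f : ℝ × (Fin 3 → ℝ) → ℝ) (p : ℝ × (Fin 3 → ℝ)) :
    ps i f p = lineDeriv ℝ f p (0, Pi.single i 1) := by
  have line (t : ℝ) : Function.update p.2 i (p.2 i + t) = p.2 + t • Pi.single i 1 := by
    ext j
    by_cases hj : j = i
    · subst hj; simp
    · simp [hj]
  have h := deriv_comp_const_add (f := fun s => f (p.1, Function.update p.2 i s)) (p.2 i) 0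
  simpa [ps, lineDeriv, Prod.add_def, line] using h.symm

lemma differentiable_ps (i : Fin 3) {f : ℝ × (Fin 3 → ℝ) → ℝ} (hf : ContDiff ℝ 2 f) :
    Differentiable ℝ (ps i f) := by
  rw [funext (ps_eq_lineDeriv i f)]
  exact (contDiff_lineDeriv hf one_add_one_eq_two.le _).differentiable one_ne_zero

lemma sum_eps_mul_sum_eps_mul (T : Fin 3 → Fin 3 → Fin 3 → ℝ) (a : Fin 3) :
    ∑ c, ∑ d, eps a c d * ∑ e, ∑ f, eps d e f * T c e f = ∑ c, T c a c - ∑ c, T c c a := by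
  fin_cases a <;> simp [eps, Fin.sum_univ_three] <;> ring

lemma sum_eps_mul_sub_sum_eps_mul (T : Fin 3 → Fin 3 → Fin 3 → ℝ) (a b : Fin 3) :
    ∑ c, ∑ d, eps a c d * T c d b - ∑ c, ∑ d, eps b c d * T c d a =
      ∑ e, eps a b e * (∑ n, T n e n - ∑ n, T e n n) := by
  fin_cases a <;> fin_cases b <;> simp [eps, Fin.sum_univ_three] <;> ring

/-- The spatial curl of a time-dependent vector field on `ℝ³`,
`(curl u)_a = Σ_{c,d} ε_{acd} ∂_c u_d`. The tensor curl `curlT` symmetrizes the curls of the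
columns of a matrix field. -/
noncomputable def spatialCurl (u : ℝ × (Fin 3 → ℝ) → Fin 3 → ℝ) (p : ℝ × (Fin 3 → ℝ)) :
    Fin 3 → ℝ :=
  fun a => ∑ c, ∑ d, eps a c d * ps c (fun q => u q d) p

section SpatialCurl

variable {u : ℝ × (Fin 3 → ℝ) → Fin 3 → ℝ}

lemma differentiable_spatialCurl (hu : ∀ d, ContDiff ℝ 2 (fun q => u q d)) (a : Fin 3) :
    Differentiable ℝ (fun q => spatialCurl u q a) :=
  Differentiable.fun_sum fun c _ => Differentiable.fun_sum fun d _ =>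
    (differentiable_ps c (hu d)).const_mul _

lemma lineDeriv_spatialCurl (hu : ∀ d, ContDiff ℝ 2 (fun q => u q d))
    (p v : ℝ × (Fin 3 → ℝ)) (a : Fin 3) :
    lineDeriv ℝ (fun q => spatialCurl u q a) p v =
      spatialCurl (fun q d => lineDeriv ℝ (fun r => u r d) q v) p a := by
  have hps (c d : Fin 3) : Differentiable ℝ (fun q => eps a c d * ps c (fun r => u r d) q) :=
    (differentiable_ps c (hu d)).const_mul _
  simp only [spatialCurl]
  rw [lineDeriv_fun_sum fun c _ =>
    (Differentiable.fun_sum fun d _ => hps c d).differentiableAt.lineDifferentiableAt]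
  refine Finset.sum_congr rfl fun c _ => ?_
  rw [lineDeriv_fun_sum fun d _ => (hps c d).differentiableAt.lineDifferentiableAt]
  refine Finset.sum_congr rfl fun d _ => ?_
  simp only [lineDeriv_fun_const_mul, ps_eq_lineDeriv]
  rw [lineDeriv_lineDeriv_comm (hu d) minSmoothness_of_isRCLikeNormedField.le]

lemma spatialCurl_spatialCurl (hu : ∀ d, ContDiff ℝ 2 (fun q => u q d))
    (p : ℝ × (Fin 3 → ℝ)) (a : Fin 3) :
    spatialCurl (spatialCurl u) p a =
      ps a (fun q => ∑ d, ps d (fun r => u r d) q) p - ∑ c, ps c (ps c (fun q => u q a)) p := by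
  have curl_ps (c d : Fin 3) : ps c (fun q => spatialCurl u q d) p =
      spatialCurl (fun q e => ps c (fun r => u r e) q) p d := by
    simp only [ps_eq_lineDeriv c, lineDeriv_spatialCurl hu]
  have grad_div : ps a (fun q => ∑ d, ps d (fun r => u r d) q) p =
      ∑ d, ps a (ps d (fun r => u r d)) p := by
    simp only [ps_eq_lineDeriv a]
    exact lineDeriv_fun_sum fun d _ => (differentiable_ps d (hu d) p).lineDifferentiableAt
  calc spatialCurl (spatialCurl u) p a
      = ∑ c, ∑ d, eps a c d * ∑ e, ∑ f, eps d e f * ps e (ps c (fun q => u q f)) p := by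
        rw [spatialCurl]
        simp only [curl_ps]
        rfl
    _ = ∑ c, ps a (ps c (fun q => u q c)) p - ∑ c, ps c (ps c (fun q => u q a)) p :=
        sum_eps_mul_sum_eps_mul (fun c e f => ps e (ps c (fun q => u q f)) p) a
    _ = _ := by rw [grad_div]

end SpatialCurl

lemma curlT_apply (S : ℝ × (Fin 3 → ℝ) → Matrix (Fin 3) (Fin 3) ℝ) (p : ℝ × (Fin 3 → ℝ))
    (a b : Fin 3) :
    curlT S p a b =
      1 / 2 * (spatialCurl (fun q d => S q d b) p a + spatialCurl (fun q d => S q d a) p b) := by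
  simp only [curlT, Matrix.of_apply, spatialCurl, Finset.sum_add_distrib]

section TensorCurl

variable {S : ℝ × (Fin 3 → ℝ) → Matrix (Fin 3) (Fin 3) ℝ}

lemma pt_curlT (hS : ∀ a b, ContDiff ℝ 2 (fun p => S p a b)) (p : ℝ × (Fin 3 → ℝ))
    (a b : Fin 3) :
    pt (fun q => curlT S q a b) p =
      curlT (fun q => Matrix.of fun i j => pt (fun r => S r i j) q) p a b := by
  have hcurl (i j : Fin 3) :
      LineDifferentiableAt ℝ (fun q => spatialCurl (fun r d => S r d j) q i) p (1, 0) :=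
    (differentiable_spatialCurl (fun d => hS d j) i p).lineDifferentiableAt
  simp only [curlT_apply, pt_eq_lineDeriv, Matrix.of_apply]
  rw [lineDeriv_fun_const_mul, lineDeriv_fun_add (hcurl a b) (hcurl b a),
    lineDeriv_spatialCurl fun d => hS d b, lineDeriv_spatialCurl fun d => hS d a]

lemma spatialCurl_col_comm (hS : ∀ a, Differentiable ℝ (fun p => S p a a))
    (htrace : ∀ p, ∑ a, S p a a = 0) (hdiv : ∀ p a, ∑ b, ps b (fun q => S q a b) p = 0)
    (p : ℝ × (Fin 3 → ℝ)) (a b : Fin 3) :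
    spatialCurl (fun q d => S q d b) p a = spatialCurl (fun q d => S q d a) p b := by
  have grad_trace (e : Fin 3) : ∑ n, ps e (fun q => S q n n) p = 0 := by
    simp only [ps_eq_lineDeriv e]
    rw [← lineDeriv_fun_sum fun n _ => (hS n p).lineDifferentiableAt]
    simp only [htrace, lineDeriv_fun_const]
  have antisymm_part := sum_eps_mul_sub_sum_eps_mul (fun c d n => ps c (fun q => S q d n) p) a b
  simp only [hdiv, grad_trace, sub_zero, mul_zero, Finset.sum_const_zero] at antisymm_part
  exact sub_eq_zero.mp antisymm_part

lemma curlT_eq_spatialCurl_col (hS : ∀ a, Differentiable ℝ (fun p => S p a a))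
    (htrace : ∀ p, ∑ a, S p a a = 0) (hdiv : ∀ p a, ∑ b, ps b (fun q => S q a b) p = 0)
    (p : ℝ × (Fin 3 → ℝ)) (a b : Fin 3) :
    curlT S p a b = spatialCurl (fun q d => S q d b) p a := by
  rw [curlT_apply, spatialCurl_col_comm hS htrace hdiv p b a]
  ring

lemma curlT_curlT (hS : ∀ a b, ContDiff ℝ 2 (fun p => S p a b))
    (hsymm : ∀ p a b, S p a b = S p b a) (htrace : ∀ p, ∑ a, S p a a = 0)
    (hdiv : ∀ p a, ∑ b, ps b (fun q => S q a b) p = 0) (p : ℝ × (Fin 3 → ℝ)) (a b : Fin 3) :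
    curlT (curlT S) p a b = -∑ c, ps c (ps c (fun q => S q a b)) p := by
  have hcol (j : Fin 3) : (fun q d => curlT S q d j) = spatialCurl (fun q d => S q d j) := by
    funext q d
    exact curlT_eq_spatialCurl_col (fun i => (hS i i).differentiable two_ne_zero) htrace hdiv q d j
  have div_col (q : ℝ × (Fin 3 → ℝ)) (j : Fin 3) : ∑ d, ps d (fun r => S r d j) q = 0 := by
    simp only [hsymm _ _ j, hdiv]
  have curl_curl_col (i j : Fin 3) : spatialCurl (spatialCurl (fun q d => S q d j)) p i =
      -∑ c, ps c (ps c (fun q => S q i j)) p := by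
    rw [spatialCurl_spatialCurl (fun d => hS d j)]
    simp only [div_col, ps_eq_lineDeriv i, lineDeriv_fun_const, zero_sub]
  rw [curlT_apply, hcol, hcol, curl_curl_col, curl_curl_col]
  simp only [hsymm _ b a]
  ring

end TensorCurl

theorem magnetic_weyl_wave_equation_general
    (E H : ℝ × (Fin 3 → ℝ) → Matrix (Fin 3) (Fin 3) ℝ)
    (hE : ∀ a b, ContDiff ℝ 2 (fun p => E p a b))
    (hH : ∀ a b, ContDiff ℝ 2 (fun p => H p a b))
    (hHsymm : ∀ p a b, H p a b = H p b a)
    (hHtrace : ∀ p, (∑ a, H p a a) = 0)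
    (hHdiv : ∀ p a, (∑ b, ps b (fun q => H q a b) p) = 0)
    (hdotE : ∀ p a b, pt (fun q => E q a b) p = curlT H p a b)
    (hdotH : ∀ p a b, pt (fun q => H q a b) p = -curlT E p a b) :
    ∀ p a b, pt (pt (fun q => H q a b)) p = ∑ c, ps c (ps c (fun q => H q a b)) p := by
  intro p a b
  calc pt (pt (fun q => H q a b)) p
      = pt (fun q => -curlT E q a b) p := by simp only [funext (hdotH · a b)]
    _ = -pt (fun q => curlT E q a b) p := deriv.fun_neg
    _ = -curlT (curlT H) p a b := by
        rw [pt_curlT hE]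
        simp only [hdotE]
        rfl
    _ = ∑ c, ps c (ps c (fun q => H q a b)) p := by
        rw [curlT_curlT hH hHsymm hHtrace hHdiv, neg_neg]

/-- Linearized Bianchi system for the electric and magnetic Weyl tensors about flat
spacetime: if symmetric trace-free spatially divergence-free smooth `E, H` satisfy
`∂ₜE = curl H` and `∂ₜH = −curl E`, then each component of `H` satisfies the
unit-speed wave equation `∂ₜ²H_{ab} = ΔH_{ab}`. -/
theorem magnetic_weyl_wave_equation
    (E H : ℝ × (Fin 3 → ℝ) → Matrix (Fin 3) (Fin 3) ℝ)
    (hEsmooth : ∀ a b, ContDiff ℝ (⊤ : ℕ∞) (fun p => E p a b))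
    (hHsmooth : ∀ a b, ContDiff ℝ (⊤ : ℕ∞) (fun p => H p a b))
    (hEsymm : ∀ p a b, E p a b = E p b a)
    (hHsymm : ∀ p a b, H p a b = H p b a)
    (hEtrace : ∀ p, (∑ a, E p a a) = 0)
    (hHtrace : ∀ p, (∑ a, H p a a) = 0)
    (hEdiv : ∀ p a, (∑ b, ps b (fun q => E q a b) p) = 0)
    (hHdiv : ∀ p a, (∑ b, ps b (fun q => H q a b) p) = 0)
    (hdotE : ∀ p a b, pt (fun q => E q a b) p = curlT H p a b)
    (hdotH : ∀ p a b, pt (fun q => H q a b) p = - curlT E p a b) :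
    ∀ p a b, pt (pt (fun q => H q a b)) p = ∑ c, ps c (ps c (fun q => H q a b)) p :=
  magnetic_weyl_wave_equation_general E H
    (fun a b => contDiff_infty.1 (hEsmooth a b) 2) (fun a b => contDiff_infty.1 (hHsmooth a b) 2)
    hHsymm hHtrace hHdiv hdotE hdotH
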